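/- (i) There is a unique family (m_g), indexed by the good words g, of homogeneous elements of 𝒰 with |m_g| = |g|, such that for all good words g, h of the same degree the coefficient of the word g in m_h equals 1 if g = h and 0 otherwise; moreover (m_g)_{g good} is a ℚ(q)-basis of 𝒰. (ii) The family (Ξ(g))_{g good} is a ℚ(q)-basis of 𝒰. -/

import Mathlib

open scoped BigOperators

noncomputable section

/-- The field `ℚ(q)` of rational functions over `ℚ`. -/
abbrev K : Type := RatFunc ℚ

/-- The indeterminate `q`. -/
abbrev qq : K := RatFunc.X

/-- Words on the alphabet `{w_1, …, w_r}` (the free monoid `M`). -/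
abbrev Word (r : ℕ) := List (Fin r)

/-- The space `F` with basis the words, as finitely supported families of coefficients. -/
abbrev FA (r : ℕ) := Word r →₀ K

variable {r : ℕ}

/-- `(|w|, |x|)` : the symmetric bilinear form evaluated on the degrees of two words,
where `p i j = (α_i, α_j)` is the form on simple roots. -/
def pairW (p : Fin r → Fin r → ℤ) (w x : Word r) : ℤ :=
  (w.map fun i => (x.map fun j => p i j).sum).sum

/-- Auxiliary q-shuffle on *reversed* words:
`shAux p w x` is the q-shuffle of `w.reverse` and `x.reverse`; it implements the recursion
`(w·a) * (x·b) = (w * (x·b))·a + q^{-(|w·a|,|b|)} ((w·a) * x)·b`, `w[] * x = x * w[] = x`. -/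
def shAux (p : Fin r → Fin r → ℤ) : Word r → Word r → FA r
  | [], x => Finsupp.single x.reverse 1
  | w, [] => Finsupp.single w.reverse 1
  | a :: w, b :: x =>
      Finsupp.mapDomain (fun u => u ++ [a]) (shAux p w (b :: x))
      + (qq ^ (-(pairW p (a :: w) [b]))) •
          Finsupp.mapDomain (fun u => u ++ [b]) (shAux p (a :: w) x)
  termination_by w x => w.length + x.length
  decreasing_by all_goals (first | (simp only [List.length_cons]; omega) | omega)

/-- The q-shuffle product `*` on `F`, extended bilinearly from words. -/
def shuffle (p : Fin r → Fin r → ℤ) (f g : FA r) : FA r :=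
  f.sum fun w c => g.sum fun x d => (c * d) • shAux p w.reverse x.reverse

/-- Membership in `𝒰`, the `ℚ(q)`-subalgebra of `(F, *)` generated by the letters `w_i`. -/
inductive InU (p : Fin r → Fin r → ℤ) : FA r → Prop
  | letter (i : Fin r) : InU p (Finsupp.single [i] 1)
  | one : InU p (Finsupp.single ([] : Word r) 1)
  | add : ∀ {f g : FA r}, InU p f → InU p g → InU p (f + g)
  | smul : ∀ (c : K) {f : FA r}, InU p f → InU p (c • f)
  | mul : ∀ {f g : FA r}, InU p f → InU p g → InU p (shuffle p f g)

/-- The degree of a word in `Q⁺`, recorded as the multiplicity of each simple root. -/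
def deg (w : Word r) : Fin r → ℕ := fun i => w.count i

/-- `f` is homogeneous of degree `ν`. -/
def Homog (f : FA r) (ν : Fin r → ℕ) : Prop := ∀ w ∈ f.support, deg w = ν

/-- Lexicographic order on words (a proper left factor is smaller than the word). -/
def wlt (w x : Word r) : Prop := List.Lex (· < ·) w x

def wle (w x : Word r) : Prop := wlt w x ∨ w = x

/-- `g` is the lexicographically largest word occurring (with nonzero coefficient) in `f`. -/
def IsMaxWord (f : FA r) (g : Word r) : Prop :=
  f g ≠ 0 ∧ ∀ w ∈ f.support, wle w g

/-- Good words: words of the form `max(u)` for a nonzero homogeneous `u ∈ 𝒰`. -/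
def IsGood (p : Fin r → Fin r → ℤ) (g : Word r) : Prop :=
  ∃ u : FA r, InU p u ∧ (∃ ν, Homog u ν) ∧ IsMaxWord u g

/-- `Ξ` on a word: the q-shuffle product of its letters. -/
def xiWord (p : Fin r → Fin r → ℤ) : Word r → FA r
  | [] => Finsupp.single ([] : Word r) 1
  | i :: w => shuffle p (Finsupp.single [i] 1) (xiWord p w)

/-- The data of the Cartan matrix `[a_{ij}]` of a finite-dimensional complex simple
Lie algebra of rank `r`: an integral matrix with `2` on the diagonal and nonpositive
off-diagonal entries, symmetrizable by `d_i ∈ {1,2,3}`, whose symmetrization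
`(α_i, α_j) = d_i a_{ij}` is positive definite, and which is indecomposable. -/
structure CartanData (r : ℕ) where
  a : Fin r → Fin r → ℤ
  d : Fin r → ℤ
  diag : ∀ i, a i i = 2
  offdiag : ∀ i j, i ≠ j → a i j ≤ 0
  dval : ∀ i, d i = 1 ∨ d i = 2 ∨ d i = 3
  dsymm : ∀ i j, d i * a i j = d j * a j i
  posdef : ∀ v : Fin r → ℚ, v ≠ 0 → 0 < ∑ i, ∑ j, v i * v j * ((d i * a i j : ℤ) : ℚ)
  indec : ∀ s : Finset (Fin r), s.Nonempty → s ≠ Finset.univ →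
    ∃ i ∈ s, ∃ j, j ∉ s ∧ a i j ≠ 0

/-- The symmetric bilinear form `(α_i, α_j) = d_i a_{ij}` on simple roots. -/
def CartanData.p (C : CartanData r) : Fin r → Fin r → ℤ := fun i j => C.d i * C.a i j

/-! ### The q-shuffle as a bilinear map -/

/-- Bilinear version of the q-shuffle. -/
def mulL (p : Fin r → Fin r → ℤ) : FA r →ₗ[K] FA r →ₗ[K] FA r :=
  Finsupp.linearCombination K (fun w =>
    Finsupp.linearCombination K (fun x => shAux p w.reverse x.reverse))

theorem shuffle_eq (p : Fin r → Fin r → ℤ) (f g : FA r) : shuffle p f g = mulL p f g := by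
  unfold shuffle mulL
  rw [Finsupp.linearCombination_apply, LinearMap.finsupp_sum_apply]
  refine Finsupp.sum_congr fun w _ => ?_
  rw [LinearMap.smul_apply, Finsupp.linearCombination_apply, Finsupp.smul_sum]
  refine Finsupp.sum_congr fun x _ => ?_
  rw [smul_smul]

theorem mulL_single (p : Fin r → Fin r → ℤ) (w x : Word r) :
    mulL p (Finsupp.single w 1) (Finsupp.single x 1) = shAux p w.reverse x.reverse := by
  simp [mulL]

theorem snoc_inj (c : Fin r) : Function.Injective (fun u : Word r => u ++ [c]) :=
  fun _ _ h => List.append_cancel_right h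

/-- Deletion of a last letter `c`. -/
def eL (c : Fin r) : FA r →ₗ[K] FA r := Finsupp.lcomapDomain (fun u => u ++ [c]) (snoc_inj c)

theorem eL_apply (c : Fin r) (f : FA r) (w : Word r) : eL c f w = f (w ++ [c]) := rfl

/-- Twist by the pairing with `c`. -/
def tL (p : Fin r → Fin r → ℤ) (c : Fin r) : FA r →ₗ[K] FA r :=
  Finsupp.linearCombination K (fun w => Finsupp.single w (qq ^ (-(pairW p w [c]))))

theorem tL_apply (p : Fin r → Fin r → ℤ) (c : Fin r) (f : FA r) (w : Word r) :
    tL p c f w = qq ^ (-(pairW p w [c])) * f w := by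
  induction f using Finsupp.induction_linear with
  | zero => simp
  | add f g hf hg => simp [hf, hg, mul_add]
  | single x a =>
    simp only [tL, Finsupp.linearCombination_single, Finsupp.smul_apply, smul_eq_mul]
    by_cases h : x = w
    · subst h; simp [mul_comm]
    · simp [Finsupp.single_apply, h]

theorem eL_map (c a : Fin r) (f : FA r) :
    eL c (Finsupp.mapDomain (fun u => u ++ [a]) f) = if a = c then f else 0 := by
  ext w
  rw [eL_apply]
  split_ifs with h
  · subst h
    exact Finsupp.mapDomain_apply (snoc_inj a) f w
  · rw [Finsupp.mapDomain_notin_range]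
    · rfl
    · rintro ⟨u, hu⟩
      have := List.append_inj_right' hu rfl
      simp at this
      exact h this

theorem eL_single_nil (c : Fin r) (k : K) : eL c (Finsupp.single [] k) = 0 := by
  ext w; rw [eL_apply]; simp [Finsupp.single_apply]

theorem eL_single_snoc (c a : Fin r) (w : Word r) (k : K) :
    eL c (Finsupp.single (w ++ [a]) k) = if a = c then Finsupp.single w k else 0 := by
  rw [← eL_map, Finsupp.mapDomain_single]

theorem pairW_append (p : Fin r → Fin r → ℤ) (w x y : Word r) :
    pairW p (w ++ x) y = pairW p w y + pairW p x y := by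
  simp [pairW]

theorem pairW_reverse (p : Fin r → Fin r → ℤ) (w y : Word r) :
    pairW p w.reverse y = pairW p w y := by
  simp [pairW, List.sum_reverse]

theorem shAux_nil_left (p : Fin r → Fin r → ℤ) (x : Word r) :
    shAux p [] x = Finsupp.single x.reverse 1 := by simp [shAux]

theorem shAux_nil_right (p : Fin r → Fin r → ℤ) (x : Word r) :
    shAux p x [] = Finsupp.single x.reverse 1 := by cases x <;> simp [shAux]

theorem tL_single (p : Fin r → Fin r → ℤ) (c : Fin r) (w : Word r) :
    tL p c (Finsupp.single w 1) = qq ^ (-(pairW p w [c])) • Finsupp.single w 1 := by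
  simp [tL]

theorem one_mulL (p : Fin r → Fin r → ℤ) (f : FA r) : mulL p (Finsupp.single [] 1) f = f := by
  induction f using Finsupp.induction_linear with
  | zero => simp
  | add f g hf hg => rw [map_add, hf, hg]
  | single x a =>
    rw [← mul_one a, ← smul_eq_mul, ← Finsupp.smul_single, map_smul, mulL_single]
    simp [shAux_nil_left]

theorem mulL_one (p : Fin r → Fin r → ℤ) (f : FA r) : mulL p f (Finsupp.single [] 1) = f := by
  induction f using Finsupp.induction_linear with
  | zero => simp
  | add f g hf hg => rw [map_add, LinearMap.add_apply, hf, hg]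
  | single x a =>
    rw [← mul_one a, ← smul_eq_mul, ← Finsupp.smul_single, map_smul, LinearMap.smul_apply,
      mulL_single]
    simp [shAux_nil_right]

theorem bil_ext {A B : FA r →ₗ[K] FA r →ₗ[K] FA r}
    (h : ∀ w x, A (Finsupp.single w 1) (Finsupp.single x 1)
      = B (Finsupp.single w 1) (Finsupp.single x 1)) : A = B := by
  refine Finsupp.lhom_ext' fun w => LinearMap.ext_ring ?_
  refine Finsupp.lhom_ext' fun x => LinearMap.ext_ring ?_
  exact h w x

theorem eL_mul (p : Fin r → Fin r → ℤ) (c : Fin r) (f g : FA r) :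
    eL c (mulL p f g) = mulL p (eL c f) g + mulL p (tL p c f) (eL c g) := by
  have key : (mulL p).compr₂ (eL c) = (mulL p).comp (eL c) + (mulL p).compl₁₂ (tL p c) (eL c) := by
    apply bil_ext
    intro w x
    simp only [LinearMap.compr₂_apply, LinearMap.add_apply, LinearMap.comp_apply,
      LinearMap.compl₁₂_apply]
    rcases List.eq_nil_or_concat' w with rfl | ⟨w, a, rfl⟩
    · rw [one_mulL, eL_single_nil, tL_single]
      simp [pairW, one_mulL]
    rcases List.eq_nil_or_concat' x with rfl | ⟨x, b, rfl⟩
    · rw [mulL_one, mulL_one, eL_single_nil]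
      simp
    rw [mulL_single, List.reverse_append, List.reverse_append]
    simp only [List.reverse_cons, List.reverse_nil, List.nil_append, List.cons_append]
    rw [shAux, map_add, map_smul, eL_map, eL_map, eL_single_snoc, eL_single_snoc, tL_single]
    congr 1
    · split_ifs
      · rw [mulL_single]; simp
      · simp
    · split_ifs with h
      · subst h
        rw [map_smul, LinearMap.smul_apply, mulL_single]
        rw [← pairW_reverse]
        simp
      · simp
  exact congrArg (fun A => A f g) key

theorem shAux_apply_nil (p : Fin r → Fin r → ℤ) (w x : Word r) :
    shAux p w x [] = if w = [] ∧ x = [] then 1 else 0 := by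
  rcases w with _ | ⟨a, w⟩
  · rw [shAux_nil_left]; simp [Finsupp.single_apply]
  rcases x with _ | ⟨b, x⟩
  · rw [shAux_nil_right]; simp [Finsupp.single_apply]
  rw [shAux, Finsupp.add_apply, Finsupp.smul_apply, Finsupp.mapDomain_notin_range,
    Finsupp.mapDomain_notin_range] <;> simp

theorem mulL_apply_nil (p : Fin r → Fin r → ℤ) (f g : FA r) :
    mulL p f g [] = f [] * g [] := by
  induction f using Finsupp.induction_linear with
  | zero => simp
  | add f f' hf hf' => simp [hf, hf', add_mul]
  | single w a =>
    induction g using Finsupp.induction_linear with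
    | zero => simp
    | add f f' hf hf' => simp [hf, hf', mul_add]
    | single x b =>
      rw [← mul_one a, ← smul_eq_mul, ← Finsupp.smul_single, ← mul_one b, ← smul_eq_mul b,
        ← Finsupp.smul_single, map_smul, map_smul, LinearMap.smul_apply, Finsupp.smul_apply,
        Finsupp.smul_apply, mulL_single, shAux_apply_nil]
      by_cases h : w = [] <;> by_cases h' : x = [] <;> simp [Finsupp.single_apply, h, h', mul_comm]

theorem eL_tL (p : Fin r → Fin r → ℤ) (c d : Fin r) (f : FA r) :
    eL c (tL p d f) = qq ^ (-(p c d)) • tL p d (eL c f) := by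
  ext w
  rw [eL_apply, tL_apply, Finsupp.smul_apply, tL_apply, eL_apply, pairW_append, neg_add_rev,
    zpow_add₀ RatFunc.X_ne_zero, smul_eq_mul, mul_assoc]
  simp [pairW]

theorem tL_comm (p : Fin r → Fin r → ℤ) (c d : Fin r) (f : FA r) :
    tL p c (tL p d f) = tL p d (tL p c f) := by
  ext w
  simp only [tL_apply]; ring

theorem tL_mul (p : Fin r → Fin r → ℤ) (d : Fin r) (f g : FA r) :
    tL p d (mulL p f g) = mulL p (tL p d f) (tL p d g) := by
  ext w
  induction w using List.reverseRecOn generalizing f g with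
  | nil => rw [tL_apply, mulL_apply_nil, mulL_apply_nil, tL_apply, tL_apply]; simp [pairW]
  | append_singleton w c ih =>
    rw [← eL_apply, ← eL_apply, eL_tL, eL_mul, eL_mul, eL_tL, eL_tL]
    simp only [map_smul, map_add, Finsupp.smul_apply, Finsupp.add_apply, ih, LinearMap.smul_apply,
      tL_comm p d c, smul_add]

theorem mulL_assoc (p : Fin r → Fin r → ℤ) (f g h : FA r) :
    mulL p (mulL p f g) h = mulL p f (mulL p g h) := by
  ext w
  induction w using List.reverseRecOn generalizing f g h with
  | nil => simp only [mulL_apply_nil]; ring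
  | append_singleton w c ih =>
    rw [← eL_apply, ← eL_apply]
    simp only [eL_mul, tL_mul, map_add, LinearMap.add_apply, Finsupp.add_apply, ih]
    ring

/-! ### The monomials `Ξ(w)` -/

theorem xi_nil (p : Fin r → Fin r → ℤ) : xiWord p [] = Finsupp.single ([] : Word r) 1 := rfl

theorem xi_cons (p : Fin r → Fin r → ℤ) (i : Fin r) (w : Word r) :
    xiWord p (i :: w) = mulL p (Finsupp.single [i] 1) (xiWord p w) := by
  rw [xiWord, shuffle_eq]

theorem xi_append (p : Fin r → Fin r → ℤ) (v w : Word r) :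
    xiWord p (v ++ w) = mulL p (xiWord p v) (xiWord p w) := by
  induction v with
  | nil => rw [xi_nil, one_mulL]; rfl
  | cons i v ih => rw [List.cons_append, xi_cons, xi_cons, ih, mulL_assoc]

theorem xi_single (p : Fin r → Fin r → ℤ) (i : Fin r) :
    xiWord p [i] = Finsupp.single [i] 1 := by
  rw [xi_cons, xi_nil, mulL_one]

/-- The skew derivation on words, applied to a function of words. -/
def dW (p : Fin r → Fin r → ℤ) (c : Fin r) : Word r → (Word r → K) → K
  | [], _ => 0
  | i :: v, F => (if i = c then F v else 0) + qq ^ (-(p i c)) * dW p c v (fun u => F (i :: u))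

theorem dW_snoc (p : Fin r → Fin r → ℤ) (c a : Fin r) (v : Word r) (F : Word r → K) :
    dW p c (v ++ [a]) F = dW p c v (fun u => F (u ++ [a]))
      + if a = c then qq ^ (-(pairW p v [c])) * F v else 0 := by
  induction v generalizing F with
  | nil => simp [dW, pairW]
  | cons i v ih =>
    have h : pairW p (i :: v) [c] = p i c + pairW p v [c] := by simp [pairW]
    rw [List.cons_append, dW, dW, ih, h, neg_add, zpow_add₀ RatFunc.X_ne_zero]
    split_ifs <;> simp <;> ring

theorem dW_ne_zero (p : Fin r → Fin r → ℤ) (c : Fin r) (v : Word r) (F : Word r → K)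
    (h : dW p c v F ≠ 0) : ∃ u, F u ≠ 0 ∧ v.Perm (c :: u) := by
  induction v generalizing F with
  | nil => simp [dW] at h
  | cons i v ih =>
    rw [dW] at h
    by_cases h1 : (if i = c then F v else 0) = 0
    · rw [h1, zero_add] at h
      obtain ⟨u, hu, hp⟩ := ih _ (right_ne_zero_of_mul h)
      exact ⟨i :: u, hu, (hp.cons i).trans (List.Perm.swap _ _ _)⟩
    · by_cases hi : i = c
      · subst hi
        exact ⟨v, by simpa using h1, List.Perm.refl _⟩
      · simp [hi] at h1

theorem eL_xi (p : Fin r → Fin r → ℤ) (c : Fin r) (v : Word r) (L : FA r →ₗ[K] K) :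
    L (eL c (xiWord p v)) = dW p c v (fun u => L (xiWord p u)) := by
  induction v generalizing L with
  | nil => rw [xi_nil, eL_single_nil, map_zero, dW]
  | cons i v ih =>
    have h := ih (L.comp (mulL p (Finsupp.single [i] 1)))
    simp only [LinearMap.comp_apply, ← xi_cons] at h
    rw [dW, ← h, xi_cons, eL_mul, map_add, tL_single, map_smul, LinearMap.smul_apply, map_smul]
    have h2 : eL c (Finsupp.single [i] (1 : K)) = if i = c then Finsupp.single [] 1 else 0 :=
      eL_single_snoc c i [] 1
    rw [h2]
    congr 1
    · split_ifs
      · rw [one_mulL]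
      · simp
    · simp [pairW]

theorem mul_letter (p : Fin r → Fin r → ℤ) (c : Fin r) (v : Word r) (F : FA r) :
    mulL p F (Finsupp.single [c] 1) v = dW p c v F := by
  induction v using List.reverseRecOn generalizing F with
  | nil => rw [mulL_apply_nil, dW]; simp
  | append_singleton v a ih =>
    have h2 : eL a (Finsupp.single [c] (1 : K)) = if c = a then Finsupp.single [] 1 else 0 :=
      eL_single_snoc a c [] 1
    rw [← eL_apply, eL_mul, Finsupp.add_apply, ih, dW_snoc, h2]
    congr 1
    by_cases h : c = a
    · subst h; simp [mulL_one, tL_apply]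
    · simp [h, Ne.symm h]

theorem xi_apply_snoc (p : Fin r → Fin r → ℤ) (c : Fin r) (v w : Word r) :
    xiWord p v (w ++ [c]) = dW p c v (fun u => xiWord p u w) :=
  eL_xi p c v (Finsupp.lapply w)

theorem xi_symm (p : Fin r → Fin r → ℤ) (v w : Word r) : xiWord p v w = xiWord p w v := by
  induction w using List.reverseRecOn generalizing v with
  | nil =>
    rcases v with _ | ⟨i, v⟩
    · rfl
    · rw [xi_cons, mulL_apply_nil, xi_nil]; simp
  | append_singleton w c ih =>
    rw [xi_apply_snoc, xi_append, xi_single, mul_letter]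
    congr 1
    funext u
    exact ih u

theorem xi_perm (p : Fin r → Fin r → ℤ) (v w : Word r) (h : xiWord p v w ≠ 0) : v.Perm w := by
  induction w using List.reverseRecOn generalizing v with
  | nil =>
    rw [xi_symm, xi_nil, Finsupp.single_apply] at h
    by_cases hv : [] = v
    · rw [← hv]
    · simp [hv] at h
  | append_singleton w c ih =>
    rw [xi_apply_snoc] at h
    obtain ⟨u, hu, hp⟩ := dW_ne_zero _ _ _ _ h
    exact hp.trans (((ih u hu).cons c).trans (List.perm_append_singleton c w).symm)

theorem deg_eq_of_perm {v w : Word r} (h : v.Perm w) : deg v = deg w :=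
  funext fun i => h.count_eq i

theorem xi_homog (p : Fin r → Fin r → ℤ) (v : Word r) : Homog (xiWord p v) (deg v) :=
  fun w hw => (deg_eq_of_perm (xi_perm p v w (Finsupp.mem_support_iff.1 hw))).symm

/-- The subspace `𝒰` as the span of the monomials. -/
def USub (p : Fin r → Fin r → ℤ) : Submodule K (FA r) :=
  Submodule.span K (Set.range (xiWord p))

theorem xi_inU (p : Fin r → Fin r → ℤ) (v : Word r) : InU p (xiWord p v) := by
  induction v with
  | nil => exact InU.one
  | cons i v ih => exact InU.mul (InU.letter i) ih

theorem inU_iff (p : Fin r → Fin r → ℤ) (f : FA r) : InU p f ↔ f ∈ USub p := by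
  constructor
  · intro h
    induction h with
    | letter i => exact Submodule.subset_span ⟨[i], xi_single p i⟩
    | one => exact Submodule.subset_span ⟨[], rfl⟩
    | add _ _ hf hg => exact add_mem hf hg
    | smul c _ hf => exact Submodule.smul_mem _ c hf
    | @mul f g _ _ hf hg =>
      rw [shuffle_eq]
      have := Submodule.apply_mem_map₂ (mulL p) hf hg
      rw [USub, Submodule.map₂_span_span] at this
      refine Submodule.span_mono ?_ this
      rintro _ ⟨_, ⟨v, rfl⟩, _, ⟨w, rfl⟩, rfl⟩
      exact ⟨v ++ w, xi_append p v w⟩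
  · intro h
    induction h using Submodule.span_induction with
    | mem x hx => obtain ⟨v, rfl⟩ := hx; exact xi_inU p v
    | zero => simpa using InU.smul (0 : K) (InU.one (p := p))
    | add _ _ _ _ hf hg => exact InU.add hf hg
    | smul c _ _ hf => exact InU.smul c hf

/-! ### Good words and linear algebra -/

theorem homog_apply {f : FA r} {ν : Fin r → ℕ} (h : Homog f ν) {w : Word r} (hw : deg w ≠ ν) :
    f w = 0 := by
  by_contra h0
  exact hw (h w (Finsupp.mem_support_iff.2 h0))

/-- Homogeneous elements of `𝒰` of degree `ν`. -/
def UHom (p : Fin r → Fin r → ℤ) (ν : Fin r → ℕ) : Submodule K (FA r) where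
  carrier := {f | f ∈ USub p ∧ Homog f ν}
  zero_mem' := ⟨zero_mem _, fun w hw => by simp at hw⟩
  add_mem' := by
    rintro f g ⟨hf, hf'⟩ ⟨hg, hg'⟩
    refine ⟨add_mem hf hg, fun w hw => ?_⟩
    by_contra h
    rw [Finsupp.mem_support_iff, Finsupp.add_apply, homog_apply hf' h, homog_apply hg' h] at hw
    simp at hw
  smul_mem' := by
    rintro c f ⟨hf, hf'⟩
    refine ⟨Submodule.smul_mem _ c hf, fun w hw => ?_⟩
    by_contra h
    rw [Finsupp.mem_support_iff, Finsupp.smul_apply, homog_apply hf' h] at hw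
    simp at hw

theorem wle_iff (v w : Word r) : wle v w ↔ v ≤ w := by
  rw [le_iff_lt_or_eq]; rfl

theorem exists_good (p : Fin r → Fin r → ℤ) {ν : Fin r → ℕ} {f : FA r} (hf : f ∈ UHom p ν)
    (h0 : f ≠ 0) : ∃ g, IsGood p g ∧ deg g = ν ∧ f g ≠ 0 := by
  have hne : f.support.Nonempty := Finsupp.support_nonempty_iff.2 h0
  have hm := f.support.max'_mem hne
  refine ⟨f.support.max' hne, ⟨f, (inU_iff p f).2 hf.1, ⟨ν, hf.2⟩, Finsupp.mem_support_iff.1 hm,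
    fun w hw => (wle_iff _ _).2 (f.support.le_max' w hw)⟩, hf.2 _ hm, Finsupp.mem_support_iff.1 hm⟩

theorem eq_zero_of_good (p : Fin r → Fin r → ℤ) {ν : Fin r → ℕ} {f : FA r} (hf : f ∈ UHom p ν)
    (h : ∀ g, IsGood p g → deg g = ν → f g = 0) : f = 0 := by
  by_contra h0
  obtain ⟨g, hg, hd, hne⟩ := exists_good p hf h0
  exact hne (h g hg hd)

/-- Good words of degree `ν`. -/
abbrev GW (p : Fin r → Fin r → ℤ) (ν : Fin r → ℕ) : Type :=
  {g : {g : Word r // IsGood p g} // deg g.1 = ν}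

theorem length_eq_deg (w : Word r) : w.length = ∑ i, deg w i := by
  simp only [deg]
  induction w with
  | nil => simp
  | cons a w ih => simp [List.count_cons, Finset.sum_add_distrib, ih]

instance finite_GW (p : Fin r → Fin r → ℤ) (ν : Fin r → ℕ) : Finite (GW p ν) := by
  have hfin : {l : Word r | l.length = ∑ i, ν i}.Finite := List.finite_length_eq _ _
  have := hfin.to_subtype
  refine Finite.of_injective
    (fun g : GW p ν => (⟨g.1.1, by
      rw [Set.mem_setOf_eq, length_eq_deg, g.2]⟩ : {l : Word r | l.length = ∑ i, ν i})) ?_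
  intro g h hgh
  simp only [Subtype.mk.injEq] at hgh
  exact Subtype.ext (Subtype.ext hgh)

instance fintype_GW (p : Fin r → Fin r → ℤ) (ν : Fin r → ℕ) : Fintype (GW p ν) :=
  Fintype.ofFinite _

/-- Coordinates at the good words. -/
def phi (p : Fin r → Fin r → ℤ) (ν : Fin r → ℕ) : UHom p ν →ₗ[K] (GW p ν → K) where
  toFun f g := f.1 g.1.1
  map_add' _ _ := rfl
  map_smul' _ _ := rfl

theorem phi_single (p : Fin r → Fin r → ℤ) (ν : Fin r → ℕ) (g : GW p ν) :
    (Pi.single g 1 : GW p ν → K) ∈ LinearMap.range (phi p ν) := by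
  classical
  induction g using WellFoundedLT.induction with
  | ind g ih =>
  obtain ⟨u, hu, ⟨μ, hμ⟩, hg0, hmax⟩ := g.1.2
  have hμν : μ = ν := by
    rw [← hμ _ (Finsupp.mem_support_iff.2 hg0), g.2]
  subst hμν
  let u' : UHom p μ := ⟨u, (inU_iff p u).1 hu, hμ⟩
  have hsum : phi p μ u' = ∑ h, u h.1.1 • (Pi.single h 1 : GW p μ → K) :=
    pi_eq_sum_univ' (phi p μ u') |>.trans (by
      refine Finset.sum_congr rfl fun h _ => ?_
      congr 1)
  rw [← Finset.add_sum_erase _ _ (Finset.mem_univ g)] at hsum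
  have hmem : u g.1.1 • (Pi.single g 1 : GW p μ → K) ∈ LinearMap.range (phi p μ) := by
    rw [eq_sub_of_add_eq hsum.symm]
    refine sub_mem ⟨u', rfl⟩ (Submodule.sum_mem _ fun h hh => ?_)
    by_cases h0 : u h.1.1 = 0
    · rw [h0, zero_smul]; exact zero_mem _
    · refine Submodule.smul_mem _ _ (ih h ?_)
      have hle := (wle_iff _ _).1 (hmax _ (Finsupp.mem_support_iff.2 h0))
      exact lt_of_le_of_ne hle (Finset.ne_of_mem_erase hh)
  have := Submodule.smul_mem _ (u g.1.1)⁻¹ hmem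
  rwa [smul_smul, inv_mul_cancel₀ hg0, one_smul] at this

/-- The property of the dual family. -/
def IsDual (p : Fin r → Fin r → ℤ) (g : {g : Word r // IsGood p g}) (f : FA r) : Prop :=
  InU p f ∧ Homog f (deg g.1) ∧
    ∀ h : {g : Word r // IsGood p g}, deg h.1 = deg g.1 → f h.1 = if h = g then 1 else 0

theorem exists_dual (p : Fin r → Fin r → ℤ) (g : {g : Word r // IsGood p g}) :
    ∃ f, IsDual p g f := by
  obtain ⟨f, hf⟩ := phi_single p (deg g.1) ⟨g, rfl⟩
  refine ⟨f.1, (inU_iff _ _).2 f.2.1, f.2.2, fun h hh => ?_⟩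
  have := congrFun hf ⟨h, hh⟩
  simp only [Pi.single_apply, Subtype.mk.injEq] at this
  exact this

theorem dual_unique (p : Fin r → Fin r → ℤ) (g : {g : Word r // IsGood p g}) {f f' : FA r}
    (hf : IsDual p g f) (hf' : IsDual p g f') : f = f' := by
  have hm : f - f' ∈ UHom p (deg g.1) :=
    sub_mem (⟨(inU_iff _ _).1 hf.1, hf.2.1⟩ : f ∈ UHom p (deg g.1))
      (⟨(inU_iff _ _).1 hf'.1, hf'.2.1⟩ : f' ∈ UHom p (deg g.1))
  refine sub_eq_zero.1 (eq_zero_of_good p hm fun h hh hd => ?_)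
  rw [Finsupp.sub_apply, hf.2.2 ⟨h, hh⟩ hd, hf'.2.2 ⟨h, hh⟩ hd, sub_self]

theorem dual_apply (p : Fin r → Fin r → ℤ) {g : {g : Word r // IsGood p g}} {f : FA r}
    (hf : IsDual p g f) (h : {g : Word r // IsGood p g}) : f h.1 = if h = g then 1 else 0 := by
  by_cases hd : deg h.1 = deg g.1
  · exact hf.2.2 h hd
  · rw [homog_apply hf.2.1 hd, if_neg]
    rintro rfl
    exact hd rfl

theorem xi_expand (p : Fin r → Fin r → ℤ) (m : {g : Word r // IsGood p g} → FA r)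
    (hm : ∀ g, IsDual p g (m g)) (v : Word r) :
    xiWord p v = ∑ g : GW p (deg v), xiWord p v g.1.1 • m g.1 := by
  classical
  have hmem : ∀ g : GW p (deg v), m g.1 ∈ UHom p (deg v) := fun g =>
    ⟨(inU_iff _ _).1 (hm g.1).1, by have := (hm g.1).2.1; rwa [g.2] at this⟩
  have hd : xiWord p v - ∑ g : GW p (deg v), xiWord p v g.1.1 • m g.1 ∈ UHom p (deg v) :=
    sub_mem ⟨(inU_iff _ _).1 (xi_inU p v), xi_homog p v⟩
      (Submodule.sum_mem _ fun g _ => Submodule.smul_mem _ _ (hmem g))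
  refine sub_eq_zero.1 (eq_zero_of_good p hd fun h hh hdh => ?_)
  rw [Finsupp.sub_apply, Finsupp.finset_sum_apply,
    Finset.sum_eq_single (⟨⟨h, hh⟩, hdh⟩ : GW p (deg v))]
  · rw [Finsupp.smul_apply, dual_apply p (hm _) ⟨h, hh⟩]; simp
  · intro g _ hg
    rw [Finsupp.smul_apply, dual_apply p (hm _) ⟨h, hh⟩, if_neg, smul_zero]
    rintro h'
    exact hg (Subtype.ext h'.symm)
  · simp

theorem dual_linInd (p : Fin r → Fin r → ℤ) (m : {g : Word r // IsGood p g} → FA r)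
    (hm : ∀ g, IsDual p g (m g)) : LinearIndependent K m := by
  classical
  rw [linearIndependent_iff']
  intro s c hs g hg
  have := congrArg (fun f : FA r => f g.1) hs
  simp only [Finsupp.finset_sum_apply, Finsupp.smul_apply, dual_apply p (hm _)] at this
  simpa [hg] using this

theorem dual_span (p : Fin r → Fin r → ℤ) (m : {g : Word r // IsGood p g} → FA r)
    (hm : ∀ g, IsDual p g (m g)) : USub p = Submodule.span K (Set.range m) := by
  apply le_antisymm
  · refine Submodule.span_le.2 ?_
    rintro _ ⟨v, rfl⟩
    rw [xi_expand p m hm v]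
    exact Submodule.sum_mem _ fun g _ => Submodule.smul_mem _ _ (Submodule.subset_span ⟨g.1, rfl⟩)
  · refine Submodule.span_le.2 ?_
    rintro _ ⟨g, rfl⟩
    exact (inU_iff _ _).1 (hm g).1

theorem xi_linInd (p : Fin r → Fin r → ℤ) :
    LinearIndependent K (fun g : {g : Word r // IsGood p g} => xiWord p g.1) := by
  classical
  choose m hm using exists_dual p
  rw [linearIndependent_iff']
  intro s c hs g hg
  have hker : USub p ≤ LinearMap.ker
      (∑ h ∈ s, c h • (Finsupp.lapply h.1 : FA r →ₗ[K] K)) := by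
    refine Submodule.span_le.2 ?_
    rintro _ ⟨w, rfl⟩
    have := congrArg (fun f : FA r => f w) hs
    simp only [Finsupp.finset_sum_apply, Finsupp.smul_apply, xi_symm p _ w] at this
    simpa [LinearMap.sum_apply] using this
  have := hker ((inU_iff _ _).1 (hm g).1)
  simp only [LinearMap.mem_ker, LinearMap.sum_apply, LinearMap.smul_apply, Finsupp.lapply_apply,
    dual_apply p (hm _)] at this
  simpa [hg] using this

theorem xi_span (p : Fin r → Fin r → ℤ) : USub p = Submodule.span K
    (Set.range fun g : {g : Word r // IsGood p g} => xiWord p g.1) := by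
  choose m hm using exists_dual p
  apply le_antisymm
  · refine Submodule.span_le.2 ?_
    rintro _ ⟨w, rfl⟩
    have hw : xiWord p w = ∑ g : GW p (deg w), m g.1 w • xiWord p g.1.1 := by
      ext v
      rw [Finsupp.finset_sum_apply]
      by_cases hd : deg v = deg w
      · rw [xi_symm, xi_expand p m hm v, hd, Finsupp.finset_sum_apply]
        refine Finset.sum_congr rfl fun g _ => ?_
        rw [Finsupp.smul_apply, Finsupp.smul_apply, smul_eq_mul, smul_eq_mul, mul_comm,
          xi_symm p v]
      · rw [homog_apply (xi_homog p w) hd, Finset.sum_eq_zero]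
        intro g _
        rw [Finsupp.smul_apply, homog_apply (xi_homog p g.1.1), smul_zero]
        rwa [g.2]
    rw [hw]
    exact Submodule.sum_mem _ fun g _ => Submodule.smul_mem _ _ (Submodule.subset_span ⟨g.1, rfl⟩)
  · refine Submodule.span_le.2 ?_
    rintro _ ⟨g, rfl⟩
    exact Submodule.subset_span ⟨g.1, rfl⟩

/-- Proposition 3.3: (i) there is a unique family `(m_g)` of homogeneous elements of `𝒰`,
indexed by the good words, such that the coefficient of the word `g` in `m_h` is
`δ_{g,h}` for good words `g, h` of the same degree; any such family is a `ℚ(q)`-basis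
of `𝒰`. (ii) The family `(Ξ(g))_{g good}` is a `ℚ(q)`-basis of `𝒰`. -/
theorem monomial_basis_and_good_word_basis {r : ℕ} (hr : 1 ≤ r) (C : CartanData r) :
    (∃! m : {g : Word r // IsGood C.p g} → FA r,
      ∀ g : {g : Word r // IsGood C.p g},
        InU C.p (m g) ∧ Homog (m g) (deg g.1) ∧
        ∀ h : {g : Word r // IsGood C.p g}, deg h.1 = deg g.1 →
          (m g) h.1 = if h = g then 1 else 0) ∧
    (∀ m : {g : Word r // IsGood C.p g} → FA r,
      (∀ g : {g : Word r // IsGood C.p g},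
        InU C.p (m g) ∧ Homog (m g) (deg g.1) ∧
        ∀ h : {g : Word r // IsGood C.p g}, deg h.1 = deg g.1 →
          (m g) h.1 = if h = g then 1 else 0) →
      LinearIndependent K m ∧
      ∀ f : FA r, InU C.p f ↔ f ∈ Submodule.span K (Set.range m)) ∧
    (LinearIndependent K (fun g : {g : Word r // IsGood C.p g} => xiWord C.p g.1) ∧
      ∀ f : FA r, InU C.p f ↔
        f ∈ Submodule.span K
          (Set.range fun g : {g : Word r // IsGood C.p g} => xiWord C.p g.1)) := by
  refine ⟨?_, ?_, xi_linInd C.p, fun f => ?_⟩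
  · choose m hm using exists_dual C.p
    exact ⟨m, hm, fun m' hm' => funext fun g => dual_unique C.p g (hm' g) (hm g)⟩
  · intro m hm
    exact ⟨dual_linInd C.p m hm, fun f => by rw [inU_iff, dual_span C.p m hm]⟩
  · rw [inU_iff, xi_span]
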